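/- Given a positive integer m and a field K, there exist an integer n and a squarefree monomial ideal I ⊆ S = K[x_1,…,x_n] such that ν(I) = m and g_I(k) = 1 for all k = 1,…,m. -/

import Mathlib

open MvPolynomial

/-- The squarefree monomial `∏ i ∈ F, xᵢ`. -/
noncomputable def sqMon (K : Type) [Field K] {σ : Type} (F : Finset σ) :
    MvPolynomial σ K := ∏ i ∈ F, X i

/-- `I` is a squarefree monomial ideal if it is generated by squarefree monomials. -/
def IsSqfreeMonomialIdeal (K : Type) [Field K] {σ : Type}
    (I : Ideal (MvPolynomial σ K)) : Prop :=
  ∃ 𝒢 : Set (Finset σ), I = Ideal.span ((sqMon K) '' 𝒢)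

/-- The `k`-th squarefree power `I^[k]`: the ideal generated by all squarefree
monomials belonging to `I^k`. -/
noncomputable def sqfreePower (K : Type) [Field K] {σ : Type}
    (I : Ideal (MvPolynomial σ K)) (k : ℕ) : Ideal (MvPolynomial σ K) :=
  Ideal.span {m | ∃ F : Finset σ, m = sqMon K F ∧ m ∈ I ^ k}

/-- The monomial grade `ν(I)`: the largest `k` with `I^[k] ≠ (0)`. -/
noncomputable def monGrade (K : Type) [Field K] {σ : Type}
    (I : Ideal (MvPolynomial σ K)) : ℕ :=
  sSup {k | sqfreePower K I k ≠ ⊥}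

/-- The initial degree of a squarefree monomial ideal: the least degree of a
(squarefree) monomial belonging to it. -/
noncomputable def indeg (K : Type) [Field K] {σ : Type}
    (I : Ideal (MvPolynomial σ K)) : ℕ :=
  sInf {d | ∃ F : Finset σ, F.card = d ∧ sqMon K F ∈ I}

/-- The depth of `S/I` over the polynomial ring `S`: the longest length of a
regular sequence on `S/I` consisting of elements of the irrelevant maximal ideal. -/
noncomputable def polyDepth (K : Type) [Field K] {σ : Type}
    (I : Ideal (MvPolynomial σ K)) : ℕ :=
  sSup {k | ∃ rs : List (MvPolynomial σ K), rs.length = k ∧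
    (∀ r ∈ rs, r ∈ Ideal.span (Set.range (X : σ → MvPolynomial σ K))) ∧
    RingTheory.Sequence.IsRegular (MvPolynomial σ K ⧸ I) rs}

/-- The normalized depth function `g_I(k) = depth(S/I^[k]) - (indeg(I^[k]) - 1)`. -/
noncomputable def nDepth (K : Type) [Field K] {σ : Type}
    (I : Ideal (MvPolynomial σ K)) (k : ℕ) : ℤ :=
  (polyDepth K (sqfreePower K I k) : ℤ) - ((indeg K (sqfreePower K I k) : ℤ) - 1)

open RingTheory.Sequence

section RegularQuotient

variable {R : Type*} [CommRing R]

lemma mem_sup_span_singleton {I : Ideal R} {r x : R} :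
    x ∈ I ⊔ Ideal.span {r} ↔ ∃ i ∈ I, ∃ c, i + c * r = x := by
  simp [Submodule.mem_sup, Ideal.mem_span_singleton']

lemma smul_top_quotient_eq_map_mkQ (I J : Ideal R) :
    (J • ⊤ : Submodule R (R ⧸ I)) = Submodule.map (Submodule.mkQ I) J := by
  rw [← Submodule.range_mkQ I, ← Submodule.map_top (Submodule.mkQ I), ← Submodule.map_smul'',
    smul_eq_mul, Ideal.mul_top]

lemma isWeaklyRegular_quotient_cons_iff (I : Ideal R) (r : R) (rs : List R) :
    IsWeaklyRegular (R ⧸ I) (r :: rs) ↔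
      (∀ a, a * r ∈ I → a ∈ I) ∧ IsWeaklyRegular (R ⧸ (I ⊔ Ideal.span {r})) rs := by
  rw [isWeaklyRegular_cons_iff]
  refine and_congr ?_ ?_
  · rw [isSMulRegular_iff_right_eq_zero_of_smul, Ideal.Quotient.mk_surjective.forall]
    refine forall_congr' fun a => ?_
    rw [Algebra.smul_def, Ideal.Quotient.algebraMap_eq, ← map_mul, mul_comm,
      Ideal.Quotient.eq_zero_iff_mem, Ideal.Quotient.eq_zero_iff_mem]
  · exact ((Submodule.quotEquivOfEq _ _ ((Submodule.ideal_span_singleton_smul r _).symm.trans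
      (smul_top_quotient_eq_map_mkQ I _))).trans
      (Submodule.quotientQuotientEquivQuotientSup I (Ideal.span {r}))).isWeaklyRegular_congr rs

lemma isWeaklyRegular_quotient_cons_congr {I : Ideal R} {r s : R} (rs : List R)
    (h : r - s ∈ I) :
    IsWeaklyRegular (R ⧸ I) (r :: rs) ↔ IsWeaklyRegular (R ⧸ I) (s :: rs) := by
  have key : I ⊔ Ideal.span {r} = I ⊔ Ideal.span {s} := by
    apply le_antisymm <;> refine sup_le le_sup_left ?_ <;>
      rw [Ideal.span_singleton_le_iff_mem]
    · simpa using add_mem (Ideal.mem_sup_left h)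
        (Ideal.mem_sup_right (S := I) (Ideal.mem_span_singleton_self s))
    · simpa using sub_mem (Ideal.mem_sup_right (S := I) (Ideal.mem_span_singleton_self r))
        (Ideal.mem_sup_left h)
  rw [isWeaklyRegular_quotient_cons_iff, isWeaklyRegular_quotient_cons_iff, key]
  refine and_congr_left fun _ => forall_congr' fun a => ?_
  rw [← I.add_mem_iff_left (I.mul_mem_left a h) (a := a * s)]
  ring_nf

lemma isWeaklyRegular_top_quotient (rs : List R) :
    IsWeaklyRegular (R ⧸ (⊤ : Ideal R)) rs := by
  induction rs with
  | nil => simp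
  | cons r rs ih =>
    rw [isWeaklyRegular_quotient_cons_iff, top_sup_eq]
    exact ⟨fun _ _ => trivial, ih⟩

/-- If `J` is the colon ideal `I : f`, a sequence which is weakly regular on `R ⧸ J` and on
`R ⧸ (I + (f))` is weakly regular on `R ⧸ I`. -/
lemma isWeaklyRegular_quotient_of_colon {f : R} {rs : List R} {I J : Ideal R}
    (hJ : ∀ a, a * f ∈ I ↔ a ∈ J) (h₁ : IsWeaklyRegular (R ⧸ J) rs)
    (h₂ : IsWeaklyRegular (R ⧸ (I ⊔ Ideal.span {f})) rs) : IsWeaklyRegular (R ⧸ I) rs := by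
  induction rs generalizing I J with
  | nil => simp
  | cons r rs ih =>
    rw [isWeaklyRegular_quotient_cons_iff] at *
    obtain ⟨hr₁, hrs₁⟩ := h₁
    obtain ⟨hr₂, hrs₂⟩ := h₂
    refine ⟨fun a ha => ?_, ih (J := J ⊔ Ideal.span {r}) (fun b => ?_) hrs₁ ?_⟩
    · obtain ⟨i, hi, c, rfl⟩ := mem_sup_span_singleton.1 (hr₂ a (Ideal.mem_sup_left ha))
      refine add_mem hi ((hJ _).2 (hr₁ _ ((hJ _).1 ?_)))
      have := sub_mem ha (I.mul_mem_right r hi)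
      ring_nf at this ⊢
      exact this
    · constructor
      · intro hb
        obtain ⟨i, hi, c, hc⟩ := mem_sup_span_singleton.1 hb
        obtain ⟨i', hi', d, rfl⟩ := mem_sup_span_singleton.1 <| hr₂ c <|
          mem_sup_span_singleton.2 ⟨-i, neg_mem hi, b, by linear_combination -hc⟩
        refine mem_sup_span_singleton.2 ⟨b - d * r, (hJ _).1 ?_, d, by ring⟩
        have : (b - d * r) * f = i + r * i' := by linear_combination -hc
        exact this ▸ add_mem hi (I.mul_mem_left r hi')
      · intro hb
        obtain ⟨j, hj, c, rfl⟩ := mem_sup_span_singleton.1 hb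
        exact mem_sup_span_singleton.2 ⟨j * f, (hJ _).2 hj, c * f, by ring⟩
    · rwa [sup_right_comm]

lemma length_le_supportDim_of_isRegular [IsNoetherianRing R] {M : Type*} [AddCommGroup M]
    [Module R M] [Module.Finite R M] {rs : List R} (h : IsRegular M rs) :
    (rs.length : WithBot ℕ∞) ≤ Module.supportDim R M := by
  induction rs generalizing M with
  | nil =>
    have := h.nontrivial
    simpa [Module.supportDim] using Order.krullDim_nonneg_iff.2
      (Module.nonempty_support_of_nontrivial (R := R) (M := M)).to_subtype
  | cons r rs ih =>
    rw [isRegular_cons_iff] at h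
    have := Module.supportDim_quotSMulTop_succ_le_of_notMem_minimalPrimes (M := M)
      (fun _ => h.1.notMem_of_mem_minimalPrimes)
    refine le_trans ?_ this
    push_cast [List.length_cons]
    gcongr
    exact ih h.2

lemma ringKrullDim_quotient_le_of_forall_prime (I : Ideal R) (N : WithBot ℕ∞)
    (h : ∀ p : Ideal R, p.IsPrime → I ≤ p → ringKrullDim (R ⧸ p) ≤ N) :
    ringKrullDim (R ⧸ I) ≤ N := by
  rw [ringKrullDim_quotient, Order.krullDim]
  refine iSup_le fun l => ?_
  refine le_trans ?_ (h l.head.1.asIdeal l.head.1.2 l.head.2)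
  rw [ringKrullDim_quotient]
  let l' : LTSeries (PrimeSpectrum.zeroLocus (R := R) l.head.1.asIdeal) :=
    { length := l.length
      toFun := fun i => ⟨(l i).1, l.monotone (Fin.zero_le i)⟩
      step := l.step }
  exact le_iSup (fun p : LTSeries _ => (p.length : WithBot ℕ∞)) l'

end RegularQuotient

section MonomialIdeal

variable (K : Type) [Field K] {σ : Type}

/-- The ideal generated by the squarefree monomials whose supports satisfy `U`. -/
noncomputable def sqMonIdeal (U : Finset σ → Prop) : Ideal (MvPolynomial σ K) :=
  Ideal.span (sqMon K '' {F | U F})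

variable {K}

lemma sqMon_singleton (i : σ) : sqMon K {i} = X i := by simp [sqMon]

lemma sqMon_dvd_sqMon {A B : Finset σ} (h : A ⊆ B) : sqMon K A ∣ sqMon K B :=
  Finset.prod_dvd_prod_of_subset _ _ _ h

lemma sqMon_eq_monomial (F : Finset σ) :
    sqMon K F = monomial (∑ i ∈ F, Finsupp.single i 1) 1 := by
  rw [sqMon, monomial_sum_one]
  rfl

lemma support_sum_single (F : Finset σ) :
    (∑ i ∈ F, Finsupp.single i 1 : σ →₀ ℕ).support = F := by
  classical
  ext j
  simp [Finsupp.finsetSum_apply, Finsupp.single_apply]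

lemma sum_single_le_iff (F : Finset σ) (d : σ →₀ ℕ) :
    ∑ i ∈ F, Finsupp.single i 1 ≤ d ↔ F ⊆ d.support := by
  classical
  constructor
  · intro h
    simpa only [support_sum_single] using Finsupp.support_mono h
  · intro h j
    by_cases hj : j ∈ F
    · have := h hj
      simp [Finsupp.finsetSum_apply, Finsupp.single_apply, hj] at this ⊢
      lia
    · simp [Finsupp.finsetSum_apply, Finsupp.single_apply, hj]

lemma mem_sqMonIdeal {U : Finset σ → Prop} (hU : Monotone U) {p : MvPolynomial σ K} :
    p ∈ sqMonIdeal K U ↔ ∀ d, coeff d p ≠ 0 → U d.support := by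
  have : sqMonIdeal K U = Ideal.span ((fun s => monomial s (1 : K)) ''
      ((fun F : Finset σ => ∑ i ∈ F, Finsupp.single i 1) '' {F | U F})) := by
    rw [sqMonIdeal, Set.image_image]
    simp only [sqMon_eq_monomial]
  rw [this, mem_ideal_span_monomial_image]
  refine forall_congr' fun d => ?_
  rw [mem_support_iff]
  refine imp_congr_right fun _ => ?_
  simp only [Set.mem_image, Set.mem_ofPred_eq, exists_exists_and_eq_and, sum_single_le_iff]
  exact ⟨fun ⟨F, hF, h⟩ => hU h hF, fun h => ⟨_, h, subset_rfl⟩⟩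

lemma sqMon_mem_sqMonIdeal {U : Finset σ → Prop} (hU : Monotone U) {F : Finset σ} :
    sqMon K F ∈ sqMonIdeal K U ↔ U F := by
  classical
  rw [mem_sqMonIdeal hU, sqMon_eq_monomial]
  simp [coeff_monomial, support_sum_single]

lemma sqMonIdeal_sup_span (U : Finset σ → Prop) (A : Finset σ) :
    sqMonIdeal K U ⊔ Ideal.span {sqMon K A} = sqMonIdeal K (fun F => A ⊆ F ∨ U F) := by
  apply le_antisymm
  · refine sup_le (Ideal.span_mono (Set.image_mono fun F hF => Or.inr hF)) ?_
    rw [Ideal.span_singleton_le_iff_mem]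
    exact Ideal.subset_span ⟨A, Or.inl subset_rfl, rfl⟩
  · refine Ideal.span_le.2 ?_
    rintro _ ⟨F, hF | hF, rfl⟩
    · exact Ideal.mem_sup_right (Ideal.mem_span_singleton.2 (sqMon_dvd_sqMon hF))
    · exact Ideal.mem_sup_left (Ideal.subset_span ⟨F, hF, rfl⟩)

lemma sqMonIdeal_eq_top {U : Finset σ → Prop} (h : U ∅) : sqMonIdeal K U = ⊤ :=
  (Ideal.eq_top_iff_one _).2 (Ideal.subset_span ⟨∅, h, by simp [sqMon]⟩)

lemma isWeaklyRegular_sqMonIdeal_congr {U V : Finset σ → Prop} (h : ∀ F, U F ↔ V F)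
    {rs : List (MvPolynomial σ K)}
    (hr : IsWeaklyRegular (MvPolynomial σ K ⧸ sqMonIdeal K U) rs) :
    IsWeaklyRegular (MvPolynomial σ K ⧸ sqMonIdeal K V) rs := by
  obtain rfl : U = V := funext fun F => propext (h F)
  exact hr

variable [DecidableEq σ]

lemma mul_sqMon_mem_sqMonIdeal {U : Finset σ → Prop} (hU : Monotone U) (A : Finset σ)
    (a : MvPolynomial σ K) :
    a * sqMon K A ∈ sqMonIdeal K U ↔ a ∈ sqMonIdeal K (fun F => U (F ∪ A)) := by
  have hU' : Monotone fun F => U (F ∪ A) :=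
    fun F G h => hU (Finset.union_subset_union_left h)
  have hsupp (d : σ →₀ ℕ) :
      (d + ∑ i ∈ A, Finsupp.single i 1).support = d.support ∪ A := by
    ext j
    have hj : (∑ i ∈ A, Finsupp.single i 1 : σ →₀ ℕ) j ≠ 0 ↔ j ∈ A := by
      rw [← Finsupp.mem_support_iff, support_sum_single]
    simp only [Finsupp.mem_support_iff, Finsupp.add_apply, Finset.mem_union]
    rw [← hj]
    lia
  rw [mem_sqMonIdeal hU, mem_sqMonIdeal hU', sqMon_eq_monomial]
  constructor
  · intro h d hd
    rw [← hsupp]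
    exact h _ (by simpa [coeff_mul_monomial] using hd)
  · intro h d hd
    rw [coeff_mul_monomial'] at hd
    split_ifs at hd with hle
    · rw [← tsub_add_cancel_of_le hle, hsupp]
      exact h _ (by simpa using hd)
    · exact absurd rfl hd

lemma monotone_card_inter (T : Finset σ) (k : ℕ) :
    Monotone fun F : Finset σ => k ≤ (F ∩ T).card :=
  fun _ _ h hk => hk.trans (Finset.card_le_card (Finset.inter_subset_inter_right h))

lemma monotone_inter_nonempty (Z : Finset σ) : Monotone fun F : Finset σ => (F ∩ Z).Nonempty :=
  fun _ _ h hF => hF.mono (Finset.inter_subset_inter_right h)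

lemma sqMon_mem_span_pow_iff (T F : Finset σ) (k : ℕ) :
    sqMon K F ∈ Ideal.span ((X : σ → MvPolynomial σ K) '' T) ^ k ↔ k ≤ (F ∩ T).card := by
  constructor
  · intro h
    let φ : MvPolynomial σ K →ₐ[K] Polynomial K :=
      aeval fun i => if i ∈ T then Polynomial.X else 1
    have h1 : Ideal.map φ (Ideal.span (X '' (T : Set σ))) ≤ Ideal.span {Polynomial.X} := by
      rw [Ideal.map_span, Ideal.span_le]
      rintro _ ⟨_, ⟨i, hi, rfl⟩, rfl⟩
      rw [Finset.mem_coe] at hi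
      simp [φ, hi]
    have h2 : φ (sqMon K F) ∈ Ideal.span {Polynomial.X ^ k} := by
      rw [← Ideal.span_singleton_pow]
      refine Ideal.pow_right_mono h1 k ?_
      rw [← Ideal.map_pow]
      exact Ideal.mem_map_of_mem φ h
    have h3 : φ (sqMon K F) = Polynomial.X ^ (F ∩ T).card := by
      simp [φ, sqMon]
    rw [h3, Ideal.mem_span_singleton] at h2
    exact (pow_dvd_pow_iff Polynomial.X_ne_zero Polynomial.not_isUnit_X).1 h2
  · intro h
    refine Ideal.pow_le_pow_right h (Ideal.mem_of_dvd _
      (sqMon_dvd_sqMon (Finset.inter_subset_left (s₂ := T))) ?_)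
    rw [sqMon, ← Finset.prod_const]
    exact Ideal.prod_mem_prod fun i hi =>
      Ideal.subset_span ⟨i, (Finset.mem_inter.1 hi).2, rfl⟩

lemma sqfreePower_span_variables (T : Finset σ) (k : ℕ) :
    sqfreePower K (Ideal.span ((X : σ → MvPolynomial σ K) '' T)) k =
      sqMonIdeal K fun F => k ≤ (F ∩ T).card := by
  rw [sqfreePower, sqMonIdeal]
  congr 1
  ext p
  simp only [Set.mem_ofPred_eq, Set.mem_image]
  constructor
  · rintro ⟨F, rfl, h⟩
    exact ⟨F, (sqMon_mem_span_pow_iff T F k).1 h, rfl⟩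
  · rintro ⟨F, h, rfl⟩
    exact ⟨F, rfl, (sqMon_mem_span_pow_iff T F k).2 h⟩

lemma indeg_veronese (T : Finset σ) (k : ℕ) (hk : k ≤ T.card) :
    indeg K (sqMonIdeal K fun F => k ≤ (F ∩ T).card) = k := by
  simp only [indeg, sqMon_mem_sqMonIdeal (monotone_card_inter T k)]
  refine IsLeast.csInf_eq ⟨?_, ?_⟩
  · obtain ⟨F, hF, rfl⟩ := Finset.exists_subset_card_eq hk
    exact ⟨F, rfl, by rw [Finset.inter_eq_left.2 hF]⟩
  · rintro _ ⟨F, rfl, h⟩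
    exact h.trans (Finset.card_le_card Finset.inter_subset_left)

lemma monGrade_span_variables (T : Finset σ) :
    monGrade K (Ideal.span ((X : σ → MvPolynomial σ K) '' T)) = T.card := by
  simp only [monGrade, sqfreePower_span_variables]
  refine IsGreatest.csSup_eq ⟨fun h => ?_, fun k hk => ?_⟩
  · have : sqMon K T ∈ sqMonIdeal K fun F => T.card ≤ (F ∩ T).card :=
      Ideal.subset_span ⟨T, by simp, rfl⟩
    rw [h, Ideal.mem_bot, sqMon, Finset.prod_eq_zero_iff] at this
    obtain ⟨i, -, hi⟩ := this
    exact X_ne_zero i hi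
  · by_contra! hlt
    refine hk (Ideal.span_eq_bot.2 ?_)
    rintro _ ⟨F, hF, rfl⟩
    have := Finset.card_le_card (Finset.inter_subset_right (s₁ := F) (s₂ := T))
    simp only [Set.mem_ofPred_eq] at hF
    lia

variable [Fintype σ]

/-- A sequence which is weakly regular on all coordinate subspaces of dimension `r` is weakly
regular on the quotient by a squarefree Veronese ideal of codimension `r`. -/
lemma isWeaklyRegular_of_coordinate_subspaces {rs : List (MvPolynomial σ K)} {r : ℕ}
    (h : ∀ Z : Finset σ, Zᶜ.card = r →
      IsWeaklyRegular (MvPolynomial σ K ⧸ sqMonIdeal K fun F => (F ∩ Z).Nonempty) rs)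
    (T Z : Finset σ) (hTZ : Disjoint T Z) (k : ℕ) (hk : k ≤ T.card + 1)
    (hr : (T ∪ Z)ᶜ.card + k = r + 1) :
    IsWeaklyRegular (MvPolynomial σ K ⧸
      sqMonIdeal K fun F => k ≤ (F ∩ T).card ∨ (F ∩ Z).Nonempty) rs := by
  induction T using Finset.induction_on generalizing k Z with
  | empty =>
    obtain rfl | hk0 := Nat.eq_zero_or_pos k
    · rw [sqMonIdeal_eq_top (Or.inl (Nat.zero_le _))]
      exact isWeaklyRegular_top_quotient rs
    · obtain rfl : k = 1 := by simp at hk; lia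
      exact isWeaklyRegular_sqMonIdeal_congr (fun F => by simp) (h Z (by simpa using hr))
  | insert x T hx ih =>
    obtain rfl | hk0 := Nat.eq_zero_or_pos k
    · rw [sqMonIdeal_eq_top (Or.inl (Nat.zero_le _))]
      exact isWeaklyRegular_top_quotient rs
    rw [Finset.card_insert_of_notMem hx] at hk
    rw [Finset.disjoint_insert_left] at hTZ
    obtain ⟨hxZ, hTZ⟩ := hTZ
    have hcard : (T ∪ Z)ᶜ.card = (insert x T ∪ Z)ᶜ.card + 1 := by
      rw [Finset.insert_union, Finset.compl_insert, Finset.card_erase_add_one]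
      simp [hx, hxZ]
    obtain hlt | hlt := hk.lt_or_eq
    · have hU : Monotone fun F : Finset σ =>
          k ≤ (F ∩ insert x T).card ∨ (F ∩ Z).Nonempty :=
        fun F G hFG => Or.imp (monotone_card_inter _ _ hFG) (monotone_inter_nonempty _ hFG)
      refine isWeaklyRegular_quotient_of_colon (f := sqMon K {x})
        (mul_sqMon_mem_sqMonIdeal hU {x}) ?_ ?_
      · refine isWeaklyRegular_sqMonIdeal_congr (fun F => ?_) (ih Z hTZ (k - 1) (by lia) (by lia))
        have h1 : (F ∪ {x}) ∩ insert x T = insert x (F ∩ T) := by grind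
        have h2 : (F ∪ {x}) ∩ Z = F ∩ Z := by grind
        rw [h1, h2, Finset.card_insert_of_notMem (by simp [hx])]
        exact or_congr_left (by lia)
      · rw [sqMonIdeal_sup_span]
        refine isWeaklyRegular_sqMonIdeal_congr (fun F => ?_) (ih (insert x Z)
          (by simp [hx, hTZ]) k (by lia) (by rw [← hr, Finset.insert_union, Finset.union_insert]))
        rw [Finset.singleton_subset_iff]
        by_cases hxF : x ∈ F
        · simp [hxF]
        · have h1 : F ∩ insert x Z = F ∩ Z := by grind
          have h2 : F ∩ insert x T = F ∩ T := by grind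
          simp [hxF, h1, h2]
    · have hle (F : Finset σ) : ¬ k ≤ (F ∩ insert x T).card := by
        have := Finset.card_le_card (Finset.inter_subset_right (s₁ := F) (s₂ := insert x T))
        rw [Finset.card_insert_of_notMem hx] at this
        lia
      refine isWeaklyRegular_sqMonIdeal_congr (fun F => (or_iff_right (hle F)).symm) (h Z ?_)
      have h1 := Finset.card_union_of_disjoint hTZ
      have h2 := Finset.card_compl_add_card (T ∪ Z)
      have h3 := Finset.card_compl_add_card Z
      lia

variable (K σ) in
/-- The elementary symmetric polynomials `e_r, …, e_1`. -/
noncomputable def esymmSeq : ℕ → List (MvPolynomial σ K)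
  | 0 => []
  | r + 1 => esymm σ K (r + 1) :: esymmSeq r

omit [DecidableEq σ] in
lemma length_esymmSeq (r : ℕ) : (esymmSeq K σ r).length = r := by
  induction r with
  | zero => rfl
  | succ r ih => simp [esymmSeq, ih]

omit [DecidableEq σ] in
lemma mem_irrelevant_of_mem_esymmSeq {r : ℕ} {f : MvPolynomial σ K} (hf : f ∈ esymmSeq K σ r) :
    f ∈ Ideal.span (Set.range (X : σ → MvPolynomial σ K)) := by
  induction r with
  | zero => simp [esymmSeq] at hf
  | succ r ih =>
    rw [esymmSeq, List.mem_cons] at hf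
    obtain rfl | hf := hf
    · refine sum_mem fun t ht => ?_
      obtain ⟨i, hi⟩ := Finset.card_pos.1 (by
        rw [(Finset.mem_powersetCard.1 ht).2]; exact r.succ_pos)
      exact Ideal.mem_of_dvd _ (Finset.dvd_prod_of_mem _ hi) (Ideal.subset_span ⟨i, rfl⟩)
    · exact ih hf

lemma isWeaklyRegular_esymmSeq_coordinate (r : ℕ) (Z : Finset σ) (hZ : Zᶜ.card = r) :
    IsWeaklyRegular (MvPolynomial σ K ⧸ sqMonIdeal K fun F => (F ∩ Z).Nonempty)
      (esymmSeq K σ r) := by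
  induction r generalizing Z with
  | zero => simp [esymmSeq]
  | succ r ih =>
    have hdiff : esymm σ K (r + 1) - sqMon K Zᶜ ∈
        sqMonIdeal K fun F : Finset σ => (F ∩ Z).Nonempty := by
      have hmem : Zᶜ ∈ Finset.powersetCard (r + 1) Finset.univ := by simp [hZ]
      rw [esymm, ← Finset.add_sum_erase _ _ hmem, ← sqMon, add_sub_cancel_left]
      refine sum_mem fun t ht => Ideal.subset_span ⟨t, ?_, rfl⟩
      rw [Finset.mem_erase, Finset.mem_powersetCard] at ht
      by_contra hne
      rw [Set.mem_ofPred_eq, Finset.not_nonempty_iff_eq_empty, ← Finset.disjoint_iff_inter_eq_empty,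
        ← Finset.subset_compl_iff_disjoint_right] at hne
      exact ht.1 (Finset.eq_of_subset_of_card_le hne (by lia))
    rw [esymmSeq, isWeaklyRegular_quotient_cons_congr _ hdiff, isWeaklyRegular_quotient_cons_iff,
      sqMonIdeal_sup_span]
    refine ⟨fun a ha => ?_, ?_⟩
    · rw [mul_sqMon_mem_sqMonIdeal (monotone_inter_nonempty Z)] at ha
      have hZZ (F : Finset σ) : (F ∪ Zᶜ) ∩ Z = F ∩ Z := by
        rw [Finset.union_inter_distrib_right, Finset.inter_comm Zᶜ,
          Finset.inter_compl, Finset.union_empty]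
      simpa only [hZZ] using ha
    · refine isWeaklyRegular_sqMonIdeal_congr (fun F => ?_)
        (isWeaklyRegular_of_coordinate_subspaces ih Zᶜ Z disjoint_compl_left (r + 1)
          (by lia) (by simp))
      rw [← hZ]
      refine or_congr_left (Iff.symm ⟨fun h => by rw [Finset.inter_eq_right.2 h], fun h => ?_⟩)
      exact Finset.inter_eq_right.1 (Finset.eq_of_subset_of_card_le Finset.inter_subset_right h)

omit [DecidableEq σ] in
lemma ringKrullDim_quotient_prime_le (p : Ideal (MvPolynomial σ K)) (G : Finset σ)
    (hG : ∀ i ∉ G, X i ∈ p) : ringKrullDim (MvPolynomial σ K ⧸ p) ≤ G.card := by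
  let φ : MvPolynomial G K →ₐ[K] MvPolynomial σ K ⧸ p :=
    aeval fun i => Ideal.Quotient.mk p (X i)
  have hφ : Function.Surjective φ := by
    have : φ.range = ⊤ := by
      rw [eq_top_iff, ← (AlgHom.range_eq_top _).2 (Ideal.Quotient.mkₐ_surjective K p),
        ← Algebra.map_top, ← adjoin_range_X, AlgHom.map_adjoin, Algebra.adjoin_le_iff]
      rintro _ ⟨_, ⟨i, rfl⟩, rfl⟩
      by_cases hi : i ∈ G
      · exact ⟨X ⟨i, hi⟩, by simp [φ]⟩
      · exact ⟨0, by simpa using (Ideal.Quotient.eq_zero_iff_mem.2 (hG i hi)).symm⟩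
    exact (AlgHom.range_eq_top _).1 this
  refine (ringKrullDim_le_of_surjective φ.toRingHom hφ).trans ?_
  rw [MvPolynomial.ringKrullDim_of_isNoetherianRing]
  simp

lemma ringKrullDim_quotient_veronese_le (T : Finset σ) (k : ℕ) :
    ringKrullDim (MvPolynomial σ K ⧸ sqMonIdeal K fun F => k + 1 ≤ (F ∩ T).card) ≤
      (k + Tᶜ.card : ℕ) := by
  classical
  refine ringKrullDim_quotient_le_of_forall_prime _ _ fun p hp hle => ?_
  refine (ringKrullDim_quotient_prime_le p ({i ∈ T | X i ∉ p} ∪ Tᶜ) fun i hi => ?_).trans ?_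
  · by_contra h
    simp [h] at hi
  · have hcard : ({i ∈ T | (X i : MvPolynomial σ K) ∉ p} : Finset σ).card ≤ k := by
      by_contra! hlt
      have : sqMon K {i ∈ T | (X i : MvPolynomial σ K) ∉ p} ∈ p := by
        refine hle (Ideal.subset_span ⟨_, ?_, rfl⟩)
        rwa [Set.mem_ofPred_eq, Finset.inter_eq_left.2 (Finset.filter_subset _ _)]
      rw [sqMon, hp.prod_mem_iff] at this
      obtain ⟨i, hi, hip⟩ := this
      exact (Finset.mem_filter.1 hi).2 hip
    have := Finset.card_union_le ({i ∈ T | (X i : MvPolynomial σ K) ∉ p} : Finset σ) Tᶜ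
    exact_mod_cast this.trans (by lia)

/-- The depth of the squarefree Veronese quotient, with the variables outside `T` free. -/
lemma polyDepth_veronese (T : Finset σ) (k : ℕ) (hk : k ≤ T.card) :
    polyDepth K (sqMonIdeal K fun F => k + 1 ≤ (F ∩ T).card) = k + Tᶜ.card := by
  set I := sqMonIdeal K fun F => k + 1 ≤ (F ∩ T).card
  refine IsGreatest.csSup_eq ⟨⟨esymmSeq K σ (k + Tᶜ.card), length_esymmSeq _,
    fun f hf => mem_irrelevant_of_mem_esymmSeq hf, ?_, ?_⟩, ?_⟩
  · exact isWeaklyRegular_sqMonIdeal_congr (fun F => by simp)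
      (isWeaklyRegular_of_coordinate_subspaces
        (isWeaklyRegular_esymmSeq_coordinate (K := K) (k + Tᶜ.card)) T ∅ (by simp) (k + 1)
        (by lia) (by rw [Finset.union_empty]; lia))
  · set 𝔪 := Ideal.span (Set.range (X : σ → MvPolynomial σ K))
    have h𝔪 : (1 : MvPolynomial σ K) ∉ 𝔪 := by
      intro h
      have : 𝔪 ≤ RingHom.ker (constantCoeff (R := K) (σ := σ)) := by
        rw [Ideal.span_le]
        rintro _ ⟨i, rfl⟩
        simp
      simpa using this h
    have hI : I ≤ 𝔪 := by
      refine Ideal.span_le.2 ?_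
      rintro _ ⟨F, hF, rfl⟩
      obtain ⟨i, hi⟩ := Finset.card_pos.1 (k.succ_pos.trans_le hF)
      exact Ideal.mem_of_dvd _ (Finset.dvd_prod_of_mem _ (Finset.mem_inter.1 hi).1)
        (Ideal.subset_span ⟨i, rfl⟩)
    intro htop
    rw [smul_top_quotient_eq_map_mkQ] at htop
    obtain ⟨f, hf, hf1⟩ : I.mkQ 1 ∈ Submodule.map I.mkQ (Ideal.ofList (esymmSeq K σ (k + Tᶜ.card))) :=
      htop ▸ Submodule.mem_top
    have hf𝔪 : f ∈ 𝔪 := (Ideal.span_le.2 fun g hg => mem_irrelevant_of_mem_esymmSeq hg) hf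
    have h1f : 1 - f ∈ I := (Submodule.Quotient.eq I).1 hf1.symm
    exact h𝔪 (by simpa using add_mem (hI h1f) hf𝔪)
  · rintro _ ⟨rs, rfl, -, hrs⟩
    have := (length_le_supportDim_of_isRegular hrs).trans
      ((Module.supportDim_quotient_eq_ringKrullDim I).trans_le
        (ringKrullDim_quotient_veronese_le T k))
    exact_mod_cast this

end MonomialIdeal

/-- **Lemma 4.3.** Given a positive integer `m`, there exists a squarefree monomial
ideal `I ⊆ K[x₁,…,xₙ]` such that `ν(I) = m` and `g_I(k) = 1` for all `k = 1,…,m`. -/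
theorem exists_sqfree_ideal_constant_one_normalized_depth (K : Type) [Field K]
    (m : ℕ) (hm : 1 ≤ m) :
    ∃ (n : ℕ) (I : Ideal (MvPolynomial (Fin n) K)),
      IsSqfreeMonomialIdeal K I ∧ monGrade K I = m ∧
      ∀ k : ℕ, 1 ≤ k → k ≤ m → nDepth K I k = 1 := by
  let T : Finset (Fin (m + 1)) := {0}ᶜ
  have hT : T.card = m := by simp [T, Finset.card_compl]
  refine ⟨m + 1, Ideal.span (X '' (T : Set (Fin (m + 1)))),
    ⟨(fun i => {i}) '' (T : Set (Fin (m + 1))), ?_⟩, ?_, fun k hk hkm => ?_⟩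
  · rw [Set.image_image]
    simp only [sqMon_singleton]
  · rw [monGrade_span_variables, hT]
  · obtain ⟨k, rfl⟩ := Nat.exists_eq_add_of_le' hk
    rw [nDepth, sqfreePower_span_variables, indeg_veronese T _ (by lia),
      polyDepth_veronese T k (by lia)]
    simp [T]
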